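/- arXiv:2102.06817 — 5 statements merged into one kernel-verified Lean document; each statement's English description precedes it below -/
import Mathlib

section
/- Let K ∈ (0,1). Then the random variable Z = Tr(A(Σ_n − Σ)) is centered and sub-exponential with parameters ν² = 2‖AΣ‖_F²/(n(1−K)) and b = 2‖AΣ‖_∞/(nK); explicitly, E[exp(t·Tr(A(Σ_n − Σ)))] ≤ exp(t²‖AΣ‖_F²/(n(1−K))) for all real t with |t| ≤ nK/(2‖AΣ‖_∞). -/
open MeasureTheory Matrix Real
open scoped ENNReal BigOperators NNReal

noncomputable def gaussianPDF {p : ℕ} (C : Matrix (Fin p) (Fin p) ℝ) (x : Fin p → ℝ) : ℝ≥0∞ :=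
  ENNReal.ofReal ((2 * Real.pi) ^ (-(p : ℝ) / 2) * C.det ^ (-(1:ℝ)/2) *
    Real.exp (-(1/2) * (x ⬝ᵥ C⁻¹.mulVec x)))

/-- The centered multivariate Gaussian measure `N_p(0, C)` on `Fin p → ℝ`. -/
noncomputable def gaussianMeasure {p : ℕ} (C : Matrix (Fin p) (Fin p) ℝ) :
    Measure (Fin p → ℝ) :=
  MeasureTheory.volume.withDensity (gaussianPDF C)

/-- The law of `n` i.i.d. `N_p(0, C)` vectors. -/
noncomputable def iidGaussian (n p : ℕ) (C : Matrix (Fin p) (Fin p) ℝ) :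
    Measure (Fin n → Fin p → ℝ) :=
  MeasureTheory.volume.withDensity fun X => ∏ k, gaussianPDF C (X k)

/-- The sample covariance matrix `Σ_n = (1/n) ∑ X_k X_kᵀ`. -/
noncomputable def sampleCov {n p : ℕ} (X : Fin n → Fin p → ℝ) :
    Matrix (Fin p) (Fin p) ℝ :=
  (n : ℝ)⁻¹ • ∑ k, Matrix.of fun i j => X k i * X k j

/-- Frobenius norm of a matrix. -/
noncomputable def frobNorm {p : ℕ} (M : Matrix (Fin p) (Fin p) ℝ) : ℝ :=
  Real.sqrt (∑ i, ∑ j, (M i j)^2)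

/-- Spectral (ℓ²-operator) norm of a matrix. -/
noncomputable def specNorm {p : ℕ} (M : Matrix (Fin p) (Fin p) ℝ) : ℝ :=
  ‖Matrix.toEuclideanCLM (𝕜 := ℝ) M‖

/-- The matrix `A_j` with entries `1/(2(p-j))` on the `j`-th upper and lower diagonals. -/
noncomputable def lagMatrix (p j : ℕ) : Matrix (Fin p) (Fin p) ℝ :=
  Matrix.of fun k l => if ((k:ℤ) - (l:ℤ)).natAbs = j then 1/(2*((p:ℝ) - j)) else 0

/-- Two-sided class `F(s,S,σ)` of sparse Toeplitz covariance matrices with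
diagonal value `σ0`. -/
def memF (p s S : ℕ) (σ σ0 : ℝ) (C : Matrix (Fin p) (Fin p) ℝ) : Prop :=
  C.PosDef ∧ ∃ v : ℕ → ℝ, v 0 = σ0 ∧
    (∀ i j : Fin p, C i j = v ((i:ℤ) - (j:ℤ)).natAbs) ∧
    ∃ T : Finset ℕ, T ⊆ Finset.Icc 1 S ∧ T.card = s ∧
      (∀ j ∈ T, σ ≤ |v j|) ∧ (∀ j, 1 ≤ j → j ≤ p - 1 → j ∉ T → v j = 0)

/-- One-sided class `F₊(s,S,σ)` of sparse Toeplitz covariance matrices with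
diagonal value `σ0`. -/
def memFplus (p s S : ℕ) (σ σ0 : ℝ) (C : Matrix (Fin p) (Fin p) ℝ) : Prop :=
  C.PosDef ∧ ∃ v : ℕ → ℝ, v 0 = σ0 ∧
    (∀ i j : Fin p, C i j = v ((i:ℤ) - (j:ℤ)).natAbs) ∧
    ∃ T : Finset ℕ, T ⊆ Finset.Icc 1 S ∧ T.card = s ∧
      (∀ j ∈ T, σ ≤ v j) ∧ (∀ j, 1 ≤ j → j ≤ p - 1 → j ∉ T → v j = 0)


theorem lintegral_fin_prod_eq_prod {n : ℕ} {E : Type*} [MeasurableSpace E]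
    (μ : Fin n → Measure E) [∀ i, SigmaFinite (μ i)] {f : Fin n → E → ℝ≥0∞}
    (hf : ∀ i, Measurable (f i)) :
    ∫⁻ x, ∏ i, f i (x i) ∂Measure.pi μ = ∏ i, ∫⁻ x, f i x ∂μ i := by
  induction n with
  | zero => simp
  | succ n ih =>
    have hmeas : Measurable fun x : Fin (n + 1) → E => ∏ i, f i (x i) :=
      Finset.measurable_prod _ fun i _ => (hf i).comp (measurable_pi_apply i)
    rw [← (measurePreserving_piFinSuccAbove μ 0).symm.lintegral_comp hmeas]
    simp_rw [MeasurableEquiv.piFinSuccAbove_symm_apply, Fin.insertNthEquiv,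
      Fin.prod_univ_succ, Fin.insertNth_zero, Equiv.coe_fn_mk, Fin.cons_succ,
      Fin.zero_succAbove, Fin.cons_zero]
    rw [← ih (fun i => μ i.succ) (fun i => hf i.succ)]
    have htail : Measurable fun x : Fin n → E => ∏ i : Fin n, f i.succ (x i) :=
      Finset.measurable_prod _ fun i _ => (hf i.succ).comp (measurable_pi_apply i)
    exact lintegral_prod_mul (hf 0).aemeasurable htail.aemeasurable

theorem pi_withDensity_prod {n : ℕ} {E : Type*} [MeasurableSpace E]
    (μ : Fin n → Measure E) [∀ i, SigmaFinite (μ i)] {f : Fin n → E → ℝ≥0∞}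
    (hf : ∀ i, Measurable (f i)) [∀ i, SigmaFinite ((μ i).withDensity (f i))] :
    (Measure.pi μ).withDensity (fun x => ∏ i, f i (x i)) =
      Measure.pi fun i => (μ i).withDensity (f i) := by
  refine (Measure.pi_eq fun s hs => ?_).symm
  rw [withDensity_apply _ (MeasurableSet.univ_pi hs), Measure.restrict_pi_pi,
    lintegral_fin_prod_eq_prod _ hf]
  exact Finset.prod_congr rfl fun i _ => (withDensity_apply _ (hs i)).symm

theorem map_withDensity_comp {α β : Type*} [MeasurableSpace α] [MeasurableSpace β]
    (μ : Measure α) {g : α → β} (hg : Measurable g) {h : β → ℝ≥0∞} (hh : Measurable h) :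
    (μ.withDensity (h ∘ g)).map g = (μ.map g).withDensity h := by
  ext s hs
  rw [Measure.map_apply hg hs, withDensity_apply _ (hg hs), withDensity_apply _ hs,
    setLIntegral_map hs hh hg]
  rfl

theorem pi_gaussianReal_eq_withDensity (p : ℕ) :
    Measure.pi (fun _ : Fin p => ProbabilityTheory.gaussianReal 0 1) =
      volume.withDensity fun y : Fin p → ℝ =>
        ENNReal.ofReal ((2 * π) ^ (-(p : ℝ) / 2) * rexp (-(1/2) * (y ⬝ᵥ y))) := by
  have h1 : ProbabilityTheory.gaussianReal 0 1 =
      volume.withDensity (ProbabilityTheory.gaussianPDF 0 1) :=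
    ProbabilityTheory.gaussianReal_of_var_ne_zero 0 one_ne_zero
  have : SigmaFinite (volume.withDensity (ProbabilityTheory.gaussianPDF 0 1)) := by
    rw [← h1]; infer_instance
  rw [h1, ← pi_withDensity_prod (fun _ : Fin p => (volume : Measure ℝ))
    (fun _ => ProbabilityTheory.measurable_gaussianPDF 0 1), volume_pi]
  congr 1
  ext y
  simp only [ProbabilityTheory.gaussianPDF]
  rw [← ENNReal.ofReal_prod_of_nonneg
    fun i _ => ProbabilityTheory.gaussianPDFReal_nonneg _ _ _]
  congr 1
  simp only [ProbabilityTheory.gaussianPDFReal, NNReal.coe_one, mul_one, sub_zero,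
    Finset.prod_mul_distrib, Finset.prod_const, Finset.card_univ, Fintype.card_fin,
    ← Real.exp_sum]
  congr 1
  · rw [Real.sqrt_eq_rpow, ← Real.rpow_neg (by positivity), ← Real.rpow_natCast,
      ← Real.rpow_mul (by positivity)]
    congr 1
    ring
  · rw [dotProduct, Finset.mul_sum]
    congr 1
    exact Finset.sum_congr rfl fun i _ => by ring

theorem measurable_gaussianPDF {p : ℕ} (C : Matrix (Fin p) (Fin p) ℝ) :
    Measurable (gaussianPDF C) := by
  unfold gaussianPDF
  refine ENNReal.measurable_ofReal.comp (Continuous.measurable ?_)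
  simp only [dotProduct, mulVec]
  fun_prop

/-- The linear image of the standard Gaussian under an invertible `M` is `N(0, M Mᵀ)`. -/
theorem gaussianMeasure_mul_transpose {p : ℕ} {M : Matrix (Fin p) (Fin p) ℝ} (hM : M.det ≠ 0) :
    gaussianMeasure (M * Mᵀ) =
      (Measure.pi fun _ : Fin p => ProbabilityTheory.gaussianReal 0 1).map (M *ᵥ ·) := by
  have hmeas : Measurable (M *ᵥ · : (Fin p → ℝ) → Fin p → ℝ) :=
    (Matrix.toLin' M).continuous_of_finiteDimensional.measurable
  set c : ℝ := |M.det| with hc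
  have hcpos : 0 < c := abs_pos.mpr hM
  have hdet : (M * Mᵀ).det ^ (-(1:ℝ)/2) = c⁻¹ := by
    rw [det_mul, det_transpose, ← abs_mul_abs_self, ← hc, ← pow_two, ← Real.rpow_natCast,
      ← Real.rpow_mul hcpos.le, ← Real.rpow_neg_one]
    norm_num
  have hdens : (fun y : Fin p → ℝ =>
      ENNReal.ofReal ((2 * π) ^ (-(p : ℝ) / 2) * rexp (-(1/2) * (y ⬝ᵥ y)))) =
      (fun x => ENNReal.ofReal c * gaussianPDF (M * Mᵀ) x) ∘ (M *ᵥ ·) := by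
    ext y
    have hu : IsUnit M.det := isUnit_iff_ne_zero.mpr hM
    have hq : (M *ᵥ y) ⬝ᵥ (M * Mᵀ)⁻¹ *ᵥ (M *ᵥ y) = y ⬝ᵥ y := by
      rw [mulVec_mulVec, Matrix.mul_inv_rev, Matrix.mul_assoc, nonsing_inv_mul _ hu,
        Matrix.mul_one, ← vecMul_transpose, ← dotProduct_mulVec, mulVec_mulVec,
        Matrix.mul_nonsing_inv _ (by rwa [det_transpose]), one_mulVec]
    simp only [Function.comp, gaussianPDF]
    rw [hdet, hq, ← ENNReal.ofReal_mul hcpos.le]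
    congr 1
    field_simp
  rw [pi_gaussianReal_eq_withDensity, hdens,
    map_withDensity_comp _ hmeas ((measurable_gaussianPDF _).const_mul _)]
  have hvol : (volume : Measure (Fin p → ℝ)).map (M *ᵥ ·) = ENNReal.ofReal c⁻¹ • volume := by
    have := Real.map_matrix_volume_pi_eq_smul_volume_pi hM
    rw [abs_inv] at this
    exact this
  rw [hvol, withDensity_smul_measure, show (fun x => ENNReal.ofReal c * gaussianPDF (M * Mᵀ) x) =
    ENNReal.ofReal c • gaussianPDF (M * Mᵀ) from rfl,
    withDensity_smul _ (measurable_gaussianPDF _), smul_smul,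
    ← ENNReal.ofReal_mul (by positivity), inv_mul_cancel₀ hcpos.ne', ENNReal.ofReal_one, one_smul]
  rfl

theorem iidGaussian_mul_transpose (n : ℕ) {p : ℕ} {M : Matrix (Fin p) (Fin p) ℝ}
    (hM : M.det ≠ 0) :
    iidGaussian n p (M * Mᵀ) =
      (Measure.pi fun _ : Fin n => Measure.pi fun _ : Fin p =>
        ProbabilityTheory.gaussianReal 0 1).map fun Y k => M *ᵥ Y k := by
  have hmeas : Measurable (M *ᵥ · : (Fin p → ℝ) → Fin p → ℝ) :=
    (Matrix.toLin' M).continuous_of_finiteDimensional.measurable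
  have hprob : IsProbabilityMeasure (gaussianMeasure (M * Mᵀ)) := by
    rw [gaussianMeasure_mul_transpose hM]
    exact Measure.isProbabilityMeasure_map hmeas.aemeasurable
  have : SigmaFinite (volume.withDensity (gaussianPDF (M * Mᵀ))) :=
    inferInstanceAs (SigmaFinite (gaussianMeasure (M * Mᵀ)))
  have hpi : iidGaussian n p (M * Mᵀ) =
      Measure.pi fun _ : Fin n => gaussianMeasure (M * Mᵀ) :=
    pi_withDensity_prod (fun _ : Fin n => (volume : Measure (Fin p → ℝ)))
      (fun _ => measurable_gaussianPDF _)
  have : IsProbabilityMeasure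
      ((Measure.pi fun _ : Fin p => ProbabilityTheory.gaussianReal 0 1).map (M *ᵥ ·)) :=
    Measure.isProbabilityMeasure_map hmeas.aemeasurable
  rw [hpi, gaussianMeasure_mul_transpose hM, Measure.pi_map_pi fun _ => hmeas.aemeasurable]

theorem neg_log_one_sub_le {x : ℝ} (hx : |x| < 1) :
    -log (1 - x) ≤ x + x ^ 2 / (2 * (1 - |x|)) := by
  have h1 := (hasSum_nat_add_iff' 1).mpr (Real.hasSum_pow_div_log_of_abs_lt_one hx)
  have h2 := (hasSum_geometric_of_lt_one (abs_nonneg x) hx).mul_left (x ^ 2 / 2)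
  have h3 := hasSum_le (fun n => ?_) h1 h2
  · simp only [Finset.sum_range_one, zero_add, pow_one, Nat.cast_zero, div_one] at h3
    have : x ^ 2 / (2 * (1 - |x|)) = x ^ 2 / 2 * (1 - |x|)⁻¹ := by
      rw [mul_comm 2, ← div_div, div_eq_mul_inv (x ^ 2), div_eq_mul_inv _ (2:ℝ)]; ring
    linarith
  · calc x ^ (n + 1 + 1) / ((n + 1 : ℕ) + 1 : ℝ)
        ≤ |x| ^ (n + 1 + 1) / ((n + 1 : ℕ) + 1 : ℝ) := by
          rw [← abs_pow]
          exact div_le_div_of_nonneg_right (le_abs_self _) (by positivity)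
      _ ≤ |x| ^ (n + 1 + 1) / 2 := by
          gcongr
          push_cast
          linarith [n.cast_nonneg (α := ℝ)]
      _ = x ^ 2 / 2 * |x| ^ n := by rw [← sq_abs x]; ring

theorem integral_exp_mul_sq_sub_one_gaussianReal {s : ℝ} (hs : 2 * s < 1) :
    ∫ y, rexp (s * (y ^ 2 - 1)) ∂ProbabilityTheory.gaussianReal 0 1 =
      rexp (-s) * (√(1 - 2 * s))⁻¹ := by
  rw [ProbabilityTheory.integral_gaussianReal_eq_integral_smul one_ne_zero]
  have h : ∀ y : ℝ, ProbabilityTheory.gaussianPDFReal 0 1 y • rexp (s * (y ^ 2 - 1)) =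
      (√(2 * π))⁻¹ * rexp (-s) * rexp (-(1 / 2 - s) * y ^ 2) := by
    intro y
    simp only [ProbabilityTheory.gaussianPDFReal, NNReal.coe_one, mul_one, sub_zero, smul_eq_mul]
    rw [mul_assoc, mul_assoc, ← Real.exp_add, ← Real.exp_add]
    congr 2
    ring
  simp_rw [h]
  rw [integral_const_mul, integral_gaussian,
    show π / (1 / 2 - s) = 2 * π / (1 - 2 * s) by
      have : 1 - 2 * s ≠ 0 := by linarith
      have : 1 / 2 - s ≠ 0 := by linarith
      field_simp, Real.sqrt_div (by positivity)]
  have : √(2 * π) ≠ 0 := by positivity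
  field_simp

theorem integral_exp_mul_sq_sub_one_gaussianReal_le {s K : ℝ} (hK : K < 1) (hs : 2 * |s| ≤ K) :
    ∫ y, rexp (s * (y ^ 2 - 1)) ∂ProbabilityTheory.gaussianReal 0 1 ≤
      rexp (s ^ 2 / (1 - K)) := by
  have habs : |2 * s| ≤ K := by rwa [abs_mul, abs_two]
  have hlt : 2 * s < 1 := (le_abs_self _).trans_lt (habs.trans_lt hK)
  have hpos : 0 < 1 - 2 * s := by linarith
  rw [integral_exp_mul_sq_sub_one_gaussianReal hlt]
  have hsqrt : (√(1 - 2 * s))⁻¹ = rexp (-log (1 - 2 * s) / 2) := by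
    rw [← Real.exp_log (Real.sqrt_pos.mpr hpos), ← Real.exp_neg, Real.log_sqrt hpos.le, neg_div]
  rw [hsqrt, ← Real.exp_add, Real.exp_le_exp]
  have hlog := neg_log_one_sub_le (habs.trans_lt hK)
  have hmono : (2 * s) ^ 2 / (2 * (1 - |2 * s|)) ≤ (2 * s) ^ 2 / (2 * (1 - K)) := by
    gcongr
  have : (2 * s) ^ 2 / (2 * (1 - K)) = 2 * (s ^ 2 / (1 - K)) := by
    have : 1 - K ≠ 0 := by linarith
    field_simp
  linarith

theorem integrable_sq_sub_one_gaussianReal :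
    Integrable (fun y : ℝ => y ^ 2 - 1) (ProbabilityTheory.gaussianReal 0 1) :=
  ((ProbabilityTheory.memLp_id_gaussianReal (μ := 0) (v := 1) 2).integrable_sq).sub
    (integrable_const 1)

theorem integral_sq_sub_one_gaussianReal :
    ∫ y, (y ^ 2 - 1) ∂ProbabilityTheory.gaussianReal 0 1 = 0 := by
  have hL := ProbabilityTheory.memLp_id_gaussianReal (μ := 0) (v := 1) 2
  have hv := ProbabilityTheory.variance_id_gaussianReal (μ := 0) (v := 1)
  rw [ProbabilityTheory.variance_of_integral_eq_zero hL.aestronglyMeasurable.aemeasurable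
    (by simp)] at hv
  have hsq : Integrable (fun y : ℝ => y ^ 2) (ProbabilityTheory.gaussianReal 0 1) :=
    hL.integrable_sq
  rw [integral_sub hsq (integrable_const 1)]
  simpa [sub_eq_zero] using hv

open scoped MatrixOrder Matrix.Norms.L2Operator in
/-- Simultaneous diagonalization of a positive definite `C` and a symmetric `A`. -/
theorem exists_mul_transpose_eq_and_conj_eq_diagonal {p : ℕ} {C A : Matrix (Fin p) (Fin p) ℝ}
    (hC : C.PosDef) (hA : A.IsSymm) :
    ∃ (M : Matrix (Fin p) (Fin p) ℝ) (d : Fin p → ℝ),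
      M.det ≠ 0 ∧ M * Mᵀ = C ∧ Mᵀ * A * M = diagonal d := by
  obtain ⟨B, hB⟩ := CStarAlgebra.nonneg_iff_eq_star_mul_self.mp hC.posSemidef.nonneg
  rw [star_eq_conjTranspose, conjTranspose_eq_transpose_of_trivial] at hB
  have hS : (B * A * Bᵀ).IsHermitian := by
    rw [IsHermitian, conjTranspose_eq_transpose_of_trivial, transpose_mul, transpose_mul,
      transpose_transpose, hA.eq, Matrix.mul_assoc]
  set U : Matrix (Fin p) (Fin p) ℝ := hS.eigenvectorUnitary.1
  have hUU : U * Uᵀ = 1 := by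
    have := Unitary.coe_mul_star_self hS.eigenvectorUnitary
    rwa [Unitary.coe_star, star_eq_conjTranspose, conjTranspose_eq_transpose_of_trivial] at this
  have hUU' : Uᵀ * U = 1 := mul_eq_one_comm.mp hUU
  have hspec : B * A * Bᵀ = U * diagonal hS.eigenvalues * Uᵀ := by
    have := hS.spectral_theorem
    rw [Unitary.conjStarAlgAut_apply, star_eq_conjTranspose,
      conjTranspose_eq_transpose_of_trivial] at this
    exact this
  have hMM : (Bᵀ * U) * (Bᵀ * U)ᵀ = C := by
    rw [transpose_mul, transpose_transpose, Matrix.mul_assoc, ← Matrix.mul_assoc U, hUU,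
      Matrix.one_mul, hB]
  refine ⟨Bᵀ * U, hS.eigenvalues, fun h => hC.det_pos.ne' ?_, hMM, ?_⟩
  · rw [← hMM, det_mul, h, zero_mul]
  · calc (Bᵀ * U)ᵀ * A * (Bᵀ * U) = Uᵀ * (B * A * Bᵀ) * U := by
          simp only [transpose_mul, transpose_transpose, Matrix.mul_assoc]
      _ = (Uᵀ * U) * diagonal hS.eigenvalues * (Uᵀ * U) := by
          refine (congrArg (fun S => Uᵀ * S * U) hspec).trans ?_
          simp only [Matrix.mul_assoc]
      _ = diagonal hS.eigenvalues := by rw [hUU', Matrix.one_mul, Matrix.mul_one]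

theorem trace_mul_mul_transpose_eq_sum {p : ℕ} {M A : Matrix (Fin p) (Fin p) ℝ} {d : Fin p → ℝ}
    (hd : Mᵀ * A * M = diagonal d) : trace (A * (M * Mᵀ)) = ∑ i, d i := by
  rw [← Matrix.mul_assoc, trace_mul_comm, ← Matrix.mul_assoc, hd, trace_diagonal]

theorem trace_mul_sampleCov_sub {n p : ℕ} (hn : 0 < n) {M A : Matrix (Fin p) (Fin p) ℝ}
    {d : Fin p → ℝ} (hd : Mᵀ * A * M = diagonal d) (Y : Fin n → Fin p → ℝ) :
    trace (A * (sampleCov (fun k => M *ᵥ Y k) - M * Mᵀ)) =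
      ∑ k, ∑ i, d i / n * (Y k i ^ 2 - 1) := by
  have hn' : (n : ℝ) ≠ 0 := by positivity
  have hquad : ∀ y : Fin p → ℝ,
      trace (A * Matrix.of fun i j => (M *ᵥ y) i * (M *ᵥ y) j) = ∑ i, d i * y i ^ 2 := by
    intro y
    change trace (A * vecMulVec (M *ᵥ y) (M *ᵥ y)) = _
    rw [mul_vecMulVec, trace_vecMulVec, dotProduct_comm, ← vecMul_transpose,
      ← dotProduct_mulVec, mulVec_mulVec, vecMul_transpose, mulVec_mulVec, hd]
    simp only [dotProduct, mulVec_diagonal]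
    exact Finset.sum_congr rfl fun i _ => by ring
  rw [Matrix.mul_sub, trace_sub, trace_mul_mul_transpose_eq_sum hd, sampleCov, Matrix.mul_smul,
    trace_smul, Finset.mul_sum, trace_sum, smul_eq_mul]
  simp only [hquad, mul_sub, mul_one, Finset.sum_sub_distrib, Finset.sum_const,
    Finset.card_univ, Fintype.card_fin, nsmul_eq_mul, ← Finset.sum_div]
  rw [mul_div_cancel₀ _ hn', Finset.mul_sum]
  congr 1
  refine Finset.sum_congr rfl fun k _ => ?_
  rw [Finset.mul_sum]
  exact Finset.sum_congr rfl fun i _ => by ring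

theorem trace_sq_le_frobNorm_sq {p : ℕ} (N : Matrix (Fin p) (Fin p) ℝ) :
    trace (N * N) ≤ frobNorm N ^ 2 := by
  rw [frobNorm, Real.sq_sqrt (by positivity)]
  have hswap : ∑ i, ∑ j, N j i ^ 2 = ∑ i, ∑ j, N i j ^ 2 := Finset.sum_comm
  have h : ∑ i, ∑ j, 2 * (N i j * N j i) ≤ ∑ i, ∑ j, (N i j ^ 2 + N j i ^ 2) :=
    Finset.sum_le_sum fun i _ => Finset.sum_le_sum fun j _ => by
      nlinarith [sq_nonneg (N i j - N j i)]
  simp only [Finset.sum_add_distrib, ← Finset.mul_sum] at h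
  simp only [trace, diag_apply, mul_apply]
  linarith

theorem sum_sq_le_frobNorm_sq {p : ℕ} {M A : Matrix (Fin p) (Fin p) ℝ} {d : Fin p → ℝ}
    (hd : Mᵀ * A * M = diagonal d) : ∑ i, d i ^ 2 ≤ frobNorm (A * (M * Mᵀ)) ^ 2 := by
  refine le_trans (le_of_eq ?_) (trace_sq_le_frobNorm_sq _)
  have : A * (M * Mᵀ) * (A * (M * Mᵀ)) = (A * M * (Mᵀ * A * M)) * Mᵀ := by
    simp only [Matrix.mul_assoc]
  rw [this, trace_mul_comm, hd, ← Matrix.mul_assoc, ← Matrix.mul_assoc, hd, diagonal_mul_diagonal,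
    trace_diagonal]
  exact Finset.sum_congr rfl fun i _ => pow_two _

theorem abs_le_specNorm_of_mulVec_eq_smul {p : ℕ} {N : Matrix (Fin p) (Fin p) ℝ}
    {v : Fin p → ℝ} (hv : v ≠ 0) {c : ℝ} (h : N *ᵥ v = c • v) : |c| ≤ specNorm N := by
  have hnorm : 0 < ‖WithLp.toLp 2 v‖ := by
    rw [norm_pos_iff]
    simpa using hv
  have hle := (Matrix.toEuclideanCLM (𝕜 := ℝ) N).le_opNorm (WithLp.toLp 2 v)
  rw [Matrix.toEuclideanCLM_toLp, h, WithLp.toLp_smul, norm_smul, Real.norm_eq_abs] at hle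
  exact le_of_mul_le_mul_right hle hnorm

theorem abs_le_specNorm {p : ℕ} {M A : Matrix (Fin p) (Fin p) ℝ} {d : Fin p → ℝ}
    (hM : M.det ≠ 0) (hd : Mᵀ * A * M = diagonal d) (i : Fin p) :
    |d i| ≤ specNorm (A * (M * Mᵀ)) := by
  have hu : IsUnit Mᵀ.det := by rw [det_transpose]; exact isUnit_iff_ne_zero.mpr hM
  have hcomm : A * (M * Mᵀ) * Mᵀ⁻¹ = Mᵀ⁻¹ * diagonal d := by
    rw [← hd, Matrix.mul_assoc, Matrix.mul_assoc M, mul_nonsing_inv _ hu, Matrix.mul_one,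
      Matrix.mul_assoc Mᵀ, ← Matrix.mul_assoc, nonsing_inv_mul _ hu, Matrix.one_mul]
  refine abs_le_specNorm_of_mulVec_eq_smul (v := Mᵀ⁻¹ *ᵥ Pi.single i 1) (fun h0 => ?_) ?_
  · have := congrArg (Mᵀ *ᵥ ·) h0
    simp only [mulVec_mulVec, mul_nonsing_inv _ hu, one_mulVec, mulVec_zero] at this
    simpa using congrFun this i
  · rw [mulVec_mulVec, hcomm, ← mulVec_mulVec, ← mulVec_smul]
    congr 1
    ext j
    by_cases hj : j = i
    · subst hj; simp [mulVec_diagonal]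
    · simp [mulVec_diagonal, hj]

theorem continuous_trace_mul_sampleCov_sub {n p : ℕ} (A C : Matrix (Fin p) (Fin p) ℝ) :
    Continuous fun X : Fin n → Fin p → ℝ => trace (A * (sampleCov X - C)) := by
  unfold sampleCov
  simp only [trace, diag_apply, mul_apply, Matrix.sub_apply, Matrix.smul_apply, Matrix.sum_apply,
    of_apply]
  fun_prop

/-- `Tr(A(Σ_n − Σ))` is centered and sub-exponential with parameters
`ν² = 2‖AΣ‖_F²/(n(1−K))`, `b = 2‖AΣ‖_∞/(nK)`: its mgf satisfies
`E[exp(t·Tr(A(Σ_n − Σ)))] ≤ exp(t²‖AΣ‖_F²/(n(1−K)))` for `|t| ≤ nK/(2‖AΣ‖_∞)`. -/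
theorem subexponential_trace_sampleCov {p n : ℕ} (hn : 0 < n)
    (Cov : Matrix (Fin p) (Fin p) ℝ) (hCov : Cov.PosDef)
    (A : Matrix (Fin p) (Fin p) ℝ) (hA : A.IsSymm) (hAC : A * Cov ≠ 0)
    (K : ℝ) (hK : K ∈ Set.Ioo (0:ℝ) 1) :
    (∫ X, Matrix.trace (A * (sampleCov X - Cov)) ∂ iidGaussian n p Cov) = 0 ∧
    ∀ t : ℝ, |t| ≤ (n * K) / (2 * specNorm (A * Cov)) →
      (∫ X, Real.exp (t * Matrix.trace (A * (sampleCov X - Cov))) ∂ iidGaussian n p Cov)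
        ≤ Real.exp ((2 * (frobNorm (A * Cov))^2 / (n * (1 - K))) * t^2 / 2) := by
  obtain ⟨M, d, hM, rfl, hd⟩ := exists_mul_transpose_eq_and_conj_eq_diagonal hCov hA
  have hn' : (0 : ℝ) < n := by exact_mod_cast hn
  have hK1 : 0 < 1 - K := by linarith [hK.2]
  have hcont := continuous_trace_mul_sampleCov_sub (n := n) A (M * Mᵀ)
  have hmeas : Measurable fun (Y : Fin n → Fin p → ℝ) k => M *ᵥ Y k :=
    measurable_pi_lambda _ fun k =>
      (Matrix.toLin' M).continuous_of_finiteDimensional.measurable.comp (measurable_pi_apply k)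
  rw [iidGaussian_mul_transpose n hM]
  refine ⟨?_, fun t ht => ?_⟩
  · rw [integral_map hmeas.aemeasurable hcont.aestronglyMeasurable]
    simp_rw [trace_mul_sampleCov_sub hn hd]
    have hint : ∀ i : Fin p, Integrable (fun y : Fin p → ℝ => d i / n * (y i ^ 2 - 1))
        (Measure.pi fun _ => ProbabilityTheory.gaussianReal 0 1) := fun i =>
      (integrable_comp_eval (μ := fun _ : Fin p => ProbabilityTheory.gaussianReal 0 1) (i := i)
        (f := fun y : ℝ => y ^ 2 - 1) integrable_sq_sub_one_gaussianReal).const_mul _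
    have hint_sum : Integrable (fun y : Fin p → ℝ => ∑ i, d i / n * (y i ^ 2 - 1))
        (Measure.pi fun _ => ProbabilityTheory.gaussianReal 0 1) :=
      integrable_finsetSum _ fun i _ => hint i
    rw [integral_finsetSum _ fun k _ => integrable_comp_eval (i := k) hint_sum]
    refine Finset.sum_eq_zero fun k _ => ?_
    rw [integral_comp_eval (i := k)
      (μ := fun _ : Fin n => Measure.pi fun _ : Fin p => ProbabilityTheory.gaussianReal 0 1)
      (f := fun y : Fin p → ℝ => ∑ i, d i / n * (y i ^ 2 - 1)) hint_sum.aestronglyMeasurable,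
      integral_finsetSum _ fun i _ => hint i]
    refine Finset.sum_eq_zero fun i _ => ?_
    rw [integral_const_mul, integral_comp_eval (i := i)
      (μ := fun _ : Fin p => ProbabilityTheory.gaussianReal 0 1) (f := fun y : ℝ => y ^ 2 - 1)
      integrable_sq_sub_one_gaussianReal.aestronglyMeasurable,
      integral_sq_sub_one_gaussianReal, mul_zero]
  · have hexp : Continuous fun X : Fin n → Fin p → ℝ =>
        rexp (t * trace (A * (sampleCov X - M * Mᵀ))) :=
      Real.continuous_exp.comp (hcont.const_mul t)
    rw [integral_map hmeas.aemeasurable hexp.aestronglyMeasurable]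
    have hprod : ∀ Y : Fin n → Fin p → ℝ,
        rexp (t * trace (A * (sampleCov (fun k => M *ᵥ Y k) - M * Mᵀ))) =
          ∏ k, ∏ i, rexp (t * d i / n * (Y k i ^ 2 - 1)) := by
      intro Y
      simp_rw [trace_mul_sampleCov_sub hn hd, ← Real.exp_sum, Finset.mul_sum]
      congr 1
      exact Finset.sum_congr rfl fun k _ => Finset.sum_congr rfl fun i _ => by ring
    simp_rw [hprod]
    rw [integral_fintype_prod_eq_pow
        (fun y : Fin p → ℝ => ∏ i, rexp (t * d i / n * (y i ^ 2 - 1))),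
      integral_fintype_prod_eq_prod
        (fun (i : Fin p) (y : ℝ) => rexp (t * d i / n * (y ^ 2 - 1))), Fintype.card_fin]
    have hspec : 0 < specNorm (A * (M * Mᵀ)) := by
      rw [specNorm, norm_pos_iff]
      exact (map_ne_zero_iff _ (EquivLike.injective _)).mpr hAC
    have hsmall : ∀ i, 2 * |t * d i / n| ≤ K := by
      intro i
      rw [le_div_iff₀ (by positivity)] at ht
      have := mul_le_mul_of_nonneg_left (abs_le_specNorm hM hd i) (abs_nonneg t)
      rw [abs_div, abs_mul, abs_of_pos hn', ← mul_div_assoc, div_le_iff₀ hn']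
      linarith
    calc (∏ i, ∫ y, rexp (t * d i / n * (y ^ 2 - 1)) ∂ProbabilityTheory.gaussianReal 0 1) ^ n
        ≤ (∏ i, rexp ((t * d i / n) ^ 2 / (1 - K))) ^ n := by
          refine pow_le_pow_left₀ (Finset.prod_nonneg fun i _ =>
            integral_nonneg fun y => (Real.exp_pos _).le) (Finset.prod_le_prod (fun i _ =>
            integral_nonneg fun y => (Real.exp_pos _).le) fun i _ =>
            integral_exp_mul_sq_sub_one_gaussianReal_le hK.2 (hsmall i)) n
      _ = rexp ((2 * (∑ i, d i ^ 2) / (n * (1 - K))) * t ^ 2 / 2) := by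
          rw [← Real.exp_sum, ← Real.exp_nat_mul]
          congr 1
          simp only [Finset.mul_sum, Finset.sum_div, Finset.sum_mul]
          refine Finset.sum_congr rfl fun i _ => ?_
          field_simp
      _ ≤ _ := by
          gcongr
          exact sum_sq_le_frobNorm_sq hd
end

section
/- Let 1 ≤ s ≤ S ≤ p−1, let Σ ∈ F(s,S,σ) have diagonal value σ_0 > 0, let W ⊆ {1,…,S} be a set of w ≥ 1 elements, and let A_W = ∑_{j∈W} A_j. Then ‖A_W Σ‖_∞ ≤ σ_0 · w(2s+1)/(p−S). -/
open MeasureTheory Matrix Real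
open scoped ENNReal BigOperators NNReal

/-- Schur test: a symmetric matrix whose absolute row sums are at most `r` has spectral norm
at most `r`. -/
theorem specNorm_le_of_isSymm_of_sum_abs_le {p : ℕ} {M : Matrix (Fin p) (Fin p) ℝ}
    (hM : M.IsSymm) {r : ℝ} (hr : 0 ≤ r) (hrow : ∀ i, ∑ j, |M i j| ≤ r) : specNorm M ≤ r := by
  refine ContinuousLinearMap.opNorm_le_bound _ hr fun x => ?_
  refine abs_le_of_sq_le_sq' ?_ (by positivity) |>.2
  rw [mul_pow, EuclideanSpace.real_norm_sq_eq, EuclideanSpace.real_norm_sq_eq]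
  have hcs (i : Fin p) : (∑ j, M i j * x j) ^ 2 ≤ r * ∑ j, |M i j| * x j ^ 2 := by
    have h := Finset.sum_sq_le_sum_mul_sum_of_sq_le_mul Finset.univ
      (r := fun j => M i j * x j) (f := fun j => |M i j|) (g := fun j => |M i j| * x j ^ 2)
      (fun j _ => abs_nonneg _) (fun j _ => by positivity)
      (fun j _ => by rw [mul_pow, ← sq_abs (M i j)]; exact le_of_eq (by ring))
    exact h.trans (mul_le_mul_of_nonneg_right (hrow i) (Finset.sum_nonneg fun j _ => by positivity))
  calc ∑ i, (Matrix.toEuclideanCLM (𝕜 := ℝ) M x) i ^ 2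
      = ∑ i, (∑ j, M i j * x j) ^ 2 := rfl
    _ ≤ ∑ i, r * ∑ j, |M i j| * x j ^ 2 := Finset.sum_le_sum fun i _ => hcs i
    _ = r * ∑ j, (∑ i, |M j i|) * x j ^ 2 := by
        rw [← Finset.mul_sum, Finset.sum_comm]
        simp_rw [Finset.sum_mul, hM.apply]
    _ ≤ r * ∑ j, r * x j ^ 2 := by
        gcongr with j
        exact hrow j
    _ = r ^ 2 * ∑ j, x j ^ 2 := by rw [← Finset.mul_sum]; ring

theorem specNorm_mul_le {p : ℕ} (M N : Matrix (Fin p) (Fin p) ℝ) :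
    specNorm (M * N) ≤ specNorm M * specNorm N := by
  unfold specNorm
  rw [map_mul]
  exact norm_mul_le _ _

/-- A row meets the union of the two `j`-th off-diagonals in at most two entries. -/
theorem sum_ite_natAbs_sub_eq_le {p : ℕ} (k : Fin p) (j : ℕ) {c : ℝ} (hc : 0 ≤ c) :
    ∑ l : Fin p, (if ((k : ℤ) - (l : ℤ)).natAbs = j then c else 0) ≤ 2 * c := by
  rw [← Finset.sum_filter, Finset.sum_const, nsmul_eq_mul]
  gcongr
  refine Nat.cast_le_ofNat.2 ?_
  rw [← Finset.card_map Fin.valEmbedding]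
  refine (Finset.card_le_card (t := {(k : ℕ) - j, (k : ℕ) + j}) fun l hl => ?_).trans
    Finset.card_le_two
  simp only [Finset.mem_map, Finset.mem_filter, Finset.mem_univ, true_and,
    Fin.valEmbedding_apply] at hl
  obtain ⟨l, hl, rfl⟩ := hl
  simp only [Finset.mem_insert, Finset.mem_singleton]
  omega

theorem specNorm_sum_lagMatrix_le {p S : ℕ} (hSp : S < p) {W : Finset ℕ}
    (hW : W ⊆ Finset.Icc 1 S) :
    specNorm (∑ j ∈ W, lagMatrix p j) ≤ W.card / ((p : ℝ) - S) := by
  have hpS : (0 : ℝ) < p - S := sub_pos.2 (by exact_mod_cast hSp)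
  refine specNorm_le_of_isSymm_of_sum_abs_le ?_ (by positivity) fun k => ?_
  · ext k l
    simp only [Matrix.transpose_apply, Matrix.sum_apply, lagMatrix, Matrix.of_apply]
    rw [← Int.natAbs_neg, neg_sub]
  have hj {j : ℕ} (hj : j ∈ W) : (p : ℝ) - S ≤ p - j := by
    have : (j : ℝ) ≤ S := by exact_mod_cast (Finset.mem_Icc.1 (hW hj)).2
    linarith
  calc ∑ l, |(∑ j ∈ W, lagMatrix p j) k l|
      ≤ ∑ l, ∑ j ∈ W, |lagMatrix p j k l| := by
        gcongr with l
        rw [Matrix.sum_apply]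
        exact Finset.abs_sum_le_sum_abs _ _
    _ = ∑ j ∈ W, ∑ l, |lagMatrix p j k l| := Finset.sum_comm
    _ ≤ ∑ j ∈ W, 1 / ((p : ℝ) - S) := by
        refine Finset.sum_le_sum fun j hjW => ?_
        have hpj : (0 : ℝ) < p - j := hpS.trans_le (hj hjW)
        have hc : (0 : ℝ) ≤ 1 / (2 * ((p : ℝ) - j)) := by positivity
        calc ∑ l, |lagMatrix p j k l|
            = ∑ l : Fin p, (if ((k : ℤ) - (l : ℤ)).natAbs = j
                then 1 / (2 * ((p : ℝ) - j)) else 0) := by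
              refine Finset.sum_congr rfl fun l _ => abs_of_nonneg ?_
              rw [lagMatrix, Matrix.of_apply]
              split_ifs <;> simp only [hc, le_refl]
          _ ≤ 2 * (1 / (2 * ((p : ℝ) - j))) := sum_ite_natAbs_sub_eq_le k j hc
          _ = 1 / ((p : ℝ) - j) := by field_simp
          _ ≤ 1 / ((p : ℝ) - S) := one_div_le_one_div_of_le hpS (hj hjW)
    _ = W.card / ((p : ℝ) - S) := by rw [Finset.sum_const, nsmul_eq_mul, mul_one_div]

/-- Entries of a positive semidefinite matrix with constant diagonal `a` are bounded by `a`. -/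
theorem Matrix.PosSemidef.abs_apply_le_of_diag_eq {n : Type*} [Fintype n] [DecidableEq n]
    {C : Matrix n n ℝ} (hC : C.PosSemidef) {a : ℝ} (hdiag : ∀ i, C i i = a) (i j : n) :
    |C i j| ≤ a := by
  have hsymm : C j i = C i j := by simpa using hC.isHermitian.apply i j
  have hadd := hC.dotProduct_mulVec_nonneg (Pi.single i 1 + Pi.single j 1)
  have hsub := hC.dotProduct_mulVec_nonneg (Pi.single i 1 - Pi.single j 1)
  simp [Matrix.mulVec_add, Matrix.mulVec_sub, add_dotProduct, sub_dotProduct, hdiag, hsymm]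
    at hadd hsub
  rw [abs_le]
  constructor <;> linarith

theorem memF.specNorm_le {p s S : ℕ} {σ σ0 : ℝ} (hσ0 : 0 ≤ σ0) {C : Matrix (Fin p) (Fin p) ℝ}
    (hC : memF p s S σ σ0 C) : specNorm C ≤ σ0 * (2 * s + 1) := by
  obtain ⟨hpos, v, hv0, hv, T, -, rfl, -, hzero⟩ := hC
  have habs := hpos.posSemidef.abs_apply_le_of_diag_eq (a := σ0) fun i => by rw [hv]; simpa using hv0
  refine specNorm_le_of_isSymm_of_sum_abs_le ?_ (by positivity) fun k => ?_
  · ext k l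
    rw [Matrix.transpose_apply, hv, hv, ← Int.natAbs_neg, neg_sub]
  have hentry (l : Fin p) : |C k l| ≤ (if k = l then σ0 else 0) +
      ∑ j ∈ T, if ((k : ℤ) - (l : ℤ)).natAbs = j then σ0 else 0 := by
    rw [Finset.sum_ite_eq]
    by_cases hkl : k = l
    · rw [if_pos hkl]
      exact (habs k l).trans (le_add_of_nonneg_right (by split_ifs <;> simp [hσ0]))
    · rw [if_neg hkl, zero_add]
      split_ifs with hT
      · exact habs k l
      · rw [hv, hzero _ _ _ hT, abs_zero]
        all_goals omega
  calc ∑ l, |C k l|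
      ≤ ∑ l : Fin p, ((if k = l then σ0 else 0) +
          ∑ j ∈ T, if ((k : ℤ) - (l : ℤ)).natAbs = j then σ0 else 0) :=
        Finset.sum_le_sum fun l _ => hentry l
    _ = σ0 + ∑ j ∈ T, ∑ l : Fin p, if ((k : ℤ) - (l : ℤ)).natAbs = j then σ0 else 0 := by
        rw [Finset.sum_add_distrib, Finset.sum_comm (t := T)]
        simp
    _ ≤ σ0 + ∑ j ∈ T, 2 * σ0 := by
        gcongr with j
        exact sum_ite_natAbs_sub_eq_le k j hσ0
    _ = σ0 * (2 * T.card + 1) := by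
        rw [Finset.sum_const, nsmul_eq_mul]
        ring

/-- Spectral norm bound for `A_W Σ`, `Σ ∈ F(s,S,σ)`. -/
theorem lagMatrix_sum_mul_specNorm_bound {p s S : ℕ} (hs : 1 ≤ s) (hsS : s ≤ S)
    (hSp : S ≤ p - 1) (σ σ0 : ℝ) (hσ : 0 < σ) (hσ0 : 0 < σ0)
    (Cov : Matrix (Fin p) (Fin p) ℝ) (hCov : memF p s S σ σ0 Cov)
    (W : Finset ℕ) (hW : W ⊆ Finset.Icc 1 S) (hw : 1 ≤ W.card) :
    specNorm ((∑ j ∈ W, lagMatrix p j) * Cov) ≤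
      σ0 * ((W.card : ℝ) * (2 * s + 1)) / ((p:ℝ) - S) := by
  have hp : S < p := by omega
  have hpS : (0 : ℝ) < p - S := sub_pos.2 (by exact_mod_cast hp)
  calc specNorm ((∑ j ∈ W, lagMatrix p j) * Cov)
      ≤ specNorm (∑ j ∈ W, lagMatrix p j) * specNorm Cov := specNorm_mul_le _ _
    _ ≤ W.card / ((p : ℝ) - S) * (σ0 * (2 * s + 1)) :=
        mul_le_mul (specNorm_sum_lagMatrix_le hp hW) (hCov.specNorm_le hσ0.le) (norm_nonneg _)
          (by positivity)
    _ = σ0 * ((W.card : ℝ) * (2 * s + 1)) / ((p : ℝ) - S) := by ring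
end

section
/- Let 1 ≤ s ≤ S ≤ p−1, let Σ ∈ F(s,S,σ) have diagonal value σ_0 > 0, let W ⊆ {1,…,S} be a set of w > 1 elements, and let A_W = ∑_{j∈W} A_j. Then ‖A_W Σ‖_F² ≤ σ_0² · w(2s+1)²/(2(p−S)). -/
open MeasureTheory Matrix Real
open scoped ENNReal BigOperators NNReal

namespace Matrix

/-- Schur's test for the Frobenius norm: if every row and column of `C` has absolute sum at most
`R`, then right multiplication by `C` scales the Frobenius norm by at most `R`. -/
theorem sum_sq_mul_le_of_abs_sum_le {m n : Type*} [Fintype m] [Fintype n]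
    (A : Matrix m n ℝ) (C : Matrix n n ℝ) {R : ℝ}
    (hrow : ∀ k, ∑ j, |C k j| ≤ R) (hcol : ∀ j, ∑ k, |C k j| ≤ R) :
    ∑ i, ∑ j, ((A * C) i j) ^ 2 ≤ R ^ 2 * ∑ i, ∑ k, (A i k) ^ 2 := by
  rw [Finset.mul_sum]
  refine Finset.sum_le_sum fun i _ => ?_
  rcases isEmpty_or_nonempty n with hn | ⟨⟨j₀⟩⟩
  · simp
  have hR : 0 ≤ R := (Finset.sum_nonneg fun k _ => abs_nonneg (C k j₀)).trans (hcol j₀)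
  calc ∑ j, ((A * C) i j) ^ 2 ≤ ∑ j, (∑ k, A i k ^ 2 * |C k j|) * R := by
        refine Finset.sum_le_sum fun j _ => ?_
        rw [Matrix.mul_apply]
        refine (Finset.sum_sq_le_sum_mul_sum_of_sq_le_mul Finset.univ
          (f := fun k => A i k ^ 2 * |C k j|) (g := fun k => |C k j|)
          (fun k _ => by positivity) (fun k _ => by positivity) fun k _ => ?_).trans ?_
        · rw [mul_pow, mul_assoc, abs_mul_abs_self, sq (C k j)]
        · exact mul_le_mul_of_nonneg_left (hcol j) (Finset.sum_nonneg fun k _ => by positivity)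
    _ = R * ∑ k, A i k ^ 2 * ∑ j, |C k j| := by
        rw [← Finset.sum_mul, Finset.sum_comm, mul_comm]
        simp_rw [Finset.mul_sum]
    _ ≤ R * ∑ k, A i k ^ 2 * R := by
        gcongr with k
        exact hrow k
    _ = R ^ 2 * ∑ k, A i k ^ 2 := by
        rw [← Finset.sum_mul]
        ring

/-- The entries of a positive semidefinite matrix satisfy `C i j ^ 2 ≤ C i i * C j j`. -/
theorem PosSemidef.sq_apply_le {n : Type*} [Finite n] {C : Matrix n n ℝ}
    (hC : C.PosSemidef) (i j : n) : C i j ^ 2 ≤ C i i * C j j := by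
  have h := (hC.submatrix ![i, j]).det_nonneg
  have hsymm : C j i = C i j := by simpa using hC.isHermitian.apply i j
  simp only [det_fin_two, submatrix_apply, cons_val_zero, cons_val_one, hsymm] at h
  linarith

end Matrix

theorem card_filter_natAbs_sub_mem_le {p : ℕ} (T : Finset ℕ) (j : Fin p) :
    (Finset.univ.filter fun k : Fin p => ((k : ℤ) - (j : ℤ)).natAbs ∈ insert 0 T).card
      ≤ 2 * T.card + 1 := by
  classical
  let U : Finset ℤ := insert 0 (T.image (fun t : ℕ => (t : ℤ)) ∪ T.image (fun t : ℕ => -(t : ℤ)))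
  have hU : U.card ≤ 2 * T.card + 1 := by
    refine (Finset.card_insert_le _ _).trans (Nat.succ_le_succ ?_)
    refine (Finset.card_union_le _ _).trans ?_
    rw [two_mul]
    exact Nat.add_le_add Finset.card_image_le Finset.card_image_le
  refine (Finset.card_le_card_of_injOn (fun k : Fin p => (k : ℤ) - (j : ℤ)) ?_ ?_).trans hU
  · intro k hk
    simp only [Finset.coe_filter, Finset.mem_univ, true_and, Set.mem_ofPred_eq,
      Finset.mem_insert] at hk
    simp only [U, Finset.coe_insert, Finset.coe_union, Finset.coe_image, Set.mem_insert_iff,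
      Set.mem_union, Set.mem_image, Finset.mem_coe]
    rcases hk with hk | hk
    · left; omega
    · right
      rcases Int.natAbs_eq ((k : ℤ) - (j : ℤ)) with h | h
      · exact Or.inl ⟨_, hk, h.symm⟩
      · exact Or.inr ⟨_, hk, h.symm⟩
  · intro a _ b _ hab
    simp only at hab
    ext
    omega

theorem card_filter_natAbs_sub_eq_le (p j : ℕ) :
    (Finset.univ.filter fun x : Fin p × Fin p => ((x.1 : ℤ) - (x.2 : ℤ)).natAbs = j).card
      ≤ 2 * (p - j) := by
  have hcard : ((Finset.univ : Finset Bool) ×ˢ Finset.range (p - j)).card = 2 * (p - j) := by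
    simp
  rw [← hcard]
  refine Finset.card_le_card_of_injOn
    (fun x => (decide ((x.1 : ℕ) < x.2), min (x.1 : ℕ) x.2)) ?_ ?_
  · rintro ⟨a, b⟩ h
    simp only [Finset.coe_filter, Finset.mem_univ, true_and, Set.mem_ofPred_eq] at h
    simp only [Finset.coe_product, Set.mem_prod, Finset.mem_coe, Finset.mem_univ, true_and,
      Finset.mem_range]
    omega
  · rintro ⟨a, b⟩ h ⟨c, d⟩ h' heq
    simp only [Finset.coe_filter, Finset.mem_univ, true_and, Set.mem_ofPred_eq] at h h'
    simp only [Prod.mk.injEq, decide_eq_decide] at heq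
    obtain ⟨h1, h2⟩ := heq
    simp only [Prod.mk.injEq, Fin.ext_iff]
    omega

theorem sum_sq_lagMatrix_le {p S : ℕ} (hSp : S < p) {W : Finset ℕ} (hW : W ⊆ Finset.Icc 1 S) :
    ∑ i, ∑ k, ((∑ j ∈ W, lagMatrix p j) i k) ^ 2 ≤ (W.card : ℝ) / (2 * ((p : ℝ) - S)) := by
  have hentry : ∀ i k : Fin p, ((∑ j ∈ W, lagMatrix p j) i k) ^ 2 =
      ∑ j ∈ W, if ((i : ℤ) - (k : ℤ)).natAbs = j then (1 / (2 * ((p : ℝ) - j))) ^ 2 else 0 := by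
    intro i k
    simp only [Matrix.sum_apply, lagMatrix, Matrix.of_apply, Finset.sum_ite_eq]
    split_ifs <;> simp
  simp_rw [hentry]
  rw [← Fintype.sum_prod_type' (f := fun i k : Fin p => ∑ j ∈ W,
    if ((i : ℤ) - (k : ℤ)).natAbs = j then (1 / (2 * ((p : ℝ) - j))) ^ 2 else 0),
    Finset.sum_comm, div_eq_mul_inv, ← nsmul_eq_mul]
  refine Finset.sum_le_card_nsmul _ _ _ fun j hj => ?_
  have hjS : j ≤ S := (Finset.mem_Icc.1 (hW hj)).2
  have hjS' : (j : ℝ) ≤ S := by exact_mod_cast hjS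
  have hSp' : (0 : ℝ) < p - S := sub_pos.2 (by exact_mod_cast hSp)
  have hjp : (0 : ℝ) < p - j := by linarith
  have hcard := (Nat.cast_le (α := ℝ)).2 (card_filter_natAbs_sub_eq_le p j)
  rw [Nat.cast_mul, Nat.cast_sub (hjS.trans hSp.le), Nat.cast_ofNat] at hcard
  rw [← Finset.sum_filter, Finset.sum_const, nsmul_eq_mul]
  calc _ ≤ 2 * ((p : ℝ) - j) * (1 / (2 * ((p : ℝ) - j))) ^ 2 := by gcongr
    _ = (2 * ((p : ℝ) - j))⁻¹ := by field_simp
    _ ≤ (2 * ((p : ℝ) - S))⁻¹ := by gcongr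

theorem memF.abs_apply_le {p s S : ℕ} {σ σ0 : ℝ} {C : Matrix (Fin p) (Fin p) ℝ}
    (hσ0 : 0 ≤ σ0) (hC : memF p s S σ σ0 C) (i j : Fin p) : |C i j| ≤ σ0 := by
  obtain ⟨hpos, v, hv, hCv, -⟩ := hC
  have h := hpos.posSemidef.sq_apply_le i j
  have hdiag : ∀ k, C k k = σ0 := fun k => by simp [hCv, hv]
  rw [hdiag, hdiag, ← sq] at h
  exact abs_le_of_sq_le_sq h hσ0

theorem memF.abs_col_sum_le {p s S : ℕ} {σ σ0 : ℝ} {C : Matrix (Fin p) (Fin p) ℝ}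
    (hσ0 : 0 ≤ σ0) (hC : memF p s S σ σ0 C) (j : Fin p) :
    ∑ k, |C k j| ≤ (2 * s + 1) * σ0 := by
  have hle := fun k => hC.abs_apply_le hσ0 k j
  obtain ⟨-, v, -, hCv, T, -, hT, -, hzero⟩ := hC
  rw [← Finset.sum_filter_of_ne
    (p := fun k : Fin p => ((k : ℤ) - (j : ℤ)).natAbs ∈ insert 0 T)]
  · refine (Finset.sum_le_card_nsmul _ _ σ0 fun k _ => hle k).trans ?_
    rw [nsmul_eq_mul]
    refine mul_le_mul_of_nonneg_right ?_ hσ0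
    have := card_filter_natAbs_sub_mem_le T j
    rw [hT] at this
    exact_mod_cast this
  · intro k _ hk
    contrapose! hk
    rw [Finset.mem_insert, not_or] at hk
    rw [hCv, hzero _ (Nat.one_le_iff_ne_zero.2 hk.1) (by omega) hk.2, abs_zero]

/-- Frobenius norm bound for `A_W Σ`, `Σ ∈ F(s,S,σ)`, `w > 1`. -/
theorem lagMatrix_sum_mul_frobNorm_bound {p s S : ℕ} (hs : 1 ≤ s) (hsS : s ≤ S)
    (hSp : S ≤ p - 1) (σ σ0 : ℝ) (hσ : 0 < σ) (hσ0 : 0 < σ0)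
    (Cov : Matrix (Fin p) (Fin p) ℝ) (hCov : memF p s S σ σ0 Cov)
    (W : Finset ℕ) (hW : W ⊆ Finset.Icc 1 S) (hw : 1 < W.card) :
    (frobNorm ((∑ j ∈ W, lagMatrix p j) * Cov))^2 ≤
      σ0^2 * ((W.card : ℝ) * (2 * s + 1)^2) / (2 * ((p:ℝ) - S)) := by
  have hp : S < p := by omega
  have hcol := hCov.abs_col_sum_le hσ0.le
  have hrow : ∀ k, ∑ j, |Cov k j| ≤ (2 * s + 1) * σ0 := fun k => by
    refine le_of_eq_of_le (Finset.sum_congr rfl fun j _ => ?_) (hcol k)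
    rw [← hCov.1.isHermitian.apply k j, star_trivial]
  rw [frobNorm, Real.sq_sqrt (by positivity)]
  calc _ ≤ ((2 * s + 1) * σ0) ^ 2 * ((W.card : ℝ) / (2 * ((p : ℝ) - S))) :=
        (Matrix.sum_sq_mul_le_of_abs_sum_le _ Cov hrow hcol).trans
          (mul_le_mul_of_nonneg_left (sum_sq_lagMatrix_le hp hW) (sq_nonneg _))
    _ = _ := by ring
end

section
/- Let 1 ≤ s ≤ S ≤ p−1 and let Σ ∈ F(s,S,σ) have diagonal value σ_0 > 0. For a single index j with 1 ≤ j ≤ S: if j ≤ p/2 − 1 then ‖A_j Σ‖_F² ≤ σ_0² (2s+1)/(p−S), and if p/2 ≤ j ≤ p−1 then ‖A_j Σ‖_F² ≤ σ_0² (p/2)(2s+1)/(p−S). -/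
open MeasureTheory Matrix Real
open scoped ENNReal BigOperators NNReal

/-- A row of the lag-`j` pattern has at most two nonzero entries. -/
lemma card_row_lag_le_two {p : ℕ} (j : ℕ) (k : Fin p) :
    (Finset.univ.filter fun l : Fin p => ((k:ℤ) - (l:ℤ)).natAbs = j).card ≤ 2 := by
  refine (Finset.card_le_card_of_injOn (t := (Finset.univ : Finset Bool))
    (fun l => decide (k < l)) (fun _ _ => Finset.mem_univ _) ?_).trans (by simp)
  intro a ha b hb hab
  simp only [Finset.coe_filter, Finset.mem_univ, true_and, Set.mem_ofPred_eq] at ha hb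
  simp only [decide_eq_decide, Fin.lt_def] at hab
  apply Fin.ext
  omega

/-- The lag-`j` pattern has at most `2 (p - j)` nonzero entries. -/
lemma card_lag_pairs_le (p j : ℕ) :
    (Finset.univ.filter fun x : Fin p × Fin p => ((x.1:ℤ) - (x.2:ℤ)).natAbs = j).card
      ≤ 2 * (p - j) := by
  refine (Finset.card_le_card_of_injOn (t := (Finset.univ : Finset Bool) ×ˢ Finset.range (p - j))
    (fun x => (decide (x.1 < x.2), min (x.1 : ℕ) x.2)) ?_ ?_).trans (by simp)
  · rintro ⟨a, b⟩ h
    simp only [Finset.coe_filter, Finset.mem_univ, true_and, Set.mem_ofPred_eq] at h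
    simp only [Finset.coe_product, Set.mem_prod, Finset.coe_univ, Set.mem_univ, true_and,
      Finset.mem_coe, Finset.mem_range]
    omega
  · rintro ⟨a, b⟩ h ⟨a', b'⟩ h' hab
    simp only [Finset.coe_filter, Finset.mem_univ, true_and, Set.mem_ofPred_eq] at h h'
    simp only [Prod.mk.injEq, decide_eq_decide, Fin.lt_def] at hab
    simp only [Prod.mk.injEq, Fin.ext_iff]
    omega

lemma lagMatrix_nonneg {p j : ℕ} (hj : j < p) (k l : Fin p) : 0 ≤ lagMatrix p j k l := by
  have h : (0:ℝ) < p - j := sub_pos.2 (by exact_mod_cast hj)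
  rw [lagMatrix, Matrix.of_apply]
  split_ifs <;> positivity

lemma lagMatrix_row_sum_le {p j : ℕ} (hj : j < p) (k : Fin p) :
    ∑ l, lagMatrix p j k l ≤ 1 / ((p:ℝ) - j) := by
  have h : (0:ℝ) < p - j := sub_pos.2 (by exact_mod_cast hj)
  have hc : ((Finset.univ.filter fun l : Fin p => ((k:ℤ) - (l:ℤ)).natAbs = j).card : ℝ) ≤ 2 := by
    exact_mod_cast card_row_lag_le_two j k
  simp only [lagMatrix, Matrix.of_apply, ← Finset.sum_filter, Finset.sum_const, nsmul_eq_mul]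
  calc _ ≤ 2 * (1 / (2 * ((p:ℝ) - j))) := by gcongr
    _ = _ := by field_simp

lemma lagMatrix_sum_le_one {p j : ℕ} (hj : j < p) : ∑ k, ∑ l, lagMatrix p j k l ≤ 1 := by
  have h : (0:ℝ) < p - j := sub_pos.2 (by exact_mod_cast hj)
  have hc : ((Finset.univ.filter fun x : Fin p × Fin p =>
      ((x.1:ℤ) - (x.2:ℤ)).natAbs = j).card : ℝ) ≤ 2 * ((p:ℝ) - j) := by
    rw [← Nat.cast_sub hj.le]
    exact_mod_cast card_lag_pairs_le p j
  simp only [lagMatrix, Matrix.of_apply]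
  rw [← Fintype.sum_prod_type' fun k l : Fin p =>
    if ((k:ℤ) - (l:ℤ)).natAbs = j then 1 / (2 * ((p:ℝ) - j)) else 0]
  simp only [← Finset.sum_filter, Finset.sum_const, nsmul_eq_mul]
  calc _ ≤ 2 * ((p:ℝ) - j) * (1 / (2 * ((p:ℝ) - j))) := by gcongr
    _ = _ := by field_simp

/-- Off-diagonal entries of a real positive semidefinite matrix with constant diagonal `d` are
at most `d` in absolute value. -/
lemma abs_apply_le_of_posSemidef {n : Type*} [Fintype n] [DecidableEq n] {M : Matrix n n ℝ}
    (hM : M.PosSemidef) {d : ℝ} (hd : ∀ i, M i i = d) (i k : n) : |M i k| ≤ d := by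
  have hsymm : M k i = M i k := by simpa using hM.isHermitian.apply i k
  have key : ∀ t : ℝ, 0 ≤ d + 2 * t * M i k + t ^ 2 * d := fun t => by
    have h := hM.dotProduct_mulVec_nonneg (Pi.single i 1 + Pi.single k t)
    simp only [star_trivial, Matrix.mulVec_add, add_dotProduct, dotProduct_add,
      single_dotProduct, Matrix.mulVec_single, Pi.smul_apply, Matrix.col_apply,
      MulOpposite.smul_eq_mul_unop, MulOpposite.unop_op, hd, hsymm] at h
    linarith
  have h1 := key 1
  have h2 := key (-1)
  exact abs_le.2 ⟨by linarith, by linarith⟩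

/-- Each row of a matrix in `F(s, S, σ)` has squared Euclidean norm at most `(2s+1) σ₀²`. -/
lemma memF.row_sq_sum_le {p s S : ℕ} {σ σ0 : ℝ} {C : Matrix (Fin p) (Fin p) ℝ}
    (hC : memF p s S σ σ0 C) (m : Fin p) :
    ∑ l, C m l ^ 2 ≤ σ0 ^ 2 * (2 * s + 1) := by
  obtain ⟨hpos, v, hv0, hv, T, -, hcard, -, hzero⟩ := hC
  have hent : ∀ l, C m l ^ 2 ≤ σ0 ^ 2 := fun l =>
    sq_le_sq' (abs_le.1 (abs_apply_le_of_posSemidef hpos.posSemidef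
      (fun i => by simp [hv, hv0]) m l)).1
      (abs_le.1 (abs_apply_le_of_posSemidef hpos.posSemidef (fun i => by simp [hv, hv0]) m l)).2
  set N := Finset.univ.filter fun l : Fin p => C m l ≠ 0 with hN
  have hNcard : N.card ≤ 2 * s + 1 := by
    set U : Finset ℤ := insert (m:ℤ)
      (T.image (fun t : ℕ => (m:ℤ) + t) ∪ T.image (fun t : ℕ => (m:ℤ) - t)) with hU
    have hUcard : U.card ≤ 2 * s + 1 := by
      have h1 := Finset.card_insert_le (m:ℤ)
        (T.image (fun t : ℕ => (m:ℤ) + t) ∪ T.image (fun t : ℕ => (m:ℤ) - t))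
      have h2 := Finset.card_union_le (T.image (fun t : ℕ => (m:ℤ) + t))
        (T.image (fun t : ℕ => (m:ℤ) - t))
      have h3 := Finset.card_image_le (s := T) (f := fun t : ℕ => (m:ℤ) + t)
      have h4 := Finset.card_image_le (s := T) (f := fun t : ℕ => (m:ℤ) - t)
      rw [hU]
      omega
    refine (Finset.card_le_card_of_injOn (t := U) (fun l : Fin p => (l:ℤ)) ?_ ?_).trans hUcard
    · intro l hl
      simp only [hN, Finset.coe_filter, Finset.mem_univ, true_and, Set.mem_ofPred_eq, hv] at hl
      simp only [hU, Finset.mem_coe, Finset.mem_insert, Finset.mem_union, Finset.mem_image]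
      by_cases hlm : (l:ℤ) = m
      · exact Or.inl hlm
      have hT : ((m:ℤ) - (l:ℤ)).natAbs ∈ T := by
        by_contra hT
        exact hl (hzero _ (by omega) (by omega) hT)
      rcases le_total (m:ℤ) l with h | h
      · exact Or.inr (Or.inl ⟨_, hT, by omega⟩)
      · exact Or.inr (Or.inr ⟨_, hT, by omega⟩)
    · intro a _ b _ hab
      exact Fin.ext (Int.natCast_inj.1 hab)
  calc ∑ l, C m l ^ 2 = ∑ l ∈ N, C m l ^ 2 := by
        refine (Finset.sum_subset (Finset.subset_univ _) fun l _ hl => ?_).symm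
        simp only [hN, Finset.mem_filter, Finset.mem_univ, true_and, not_not] at hl
        simp [hl]
    _ ≤ N.card • σ0 ^ 2 := Finset.sum_le_card_nsmul _ _ _ fun l _ => hent l
    _ = σ0 ^ 2 * N.card := by rw [nsmul_eq_mul, mul_comm]
    _ ≤ σ0 ^ 2 * (2 * s + 1) := by
        gcongr
        exact_mod_cast hNcard

/-- Schur-test bound for `‖A_j M‖_F²` in terms of a uniform bound on the rows of `M`. -/
lemma frobNorm_lagMatrix_mul_sq_le {p j : ℕ} (hj : j < p) (M : Matrix (Fin p) (Fin p) ℝ)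
    {R : ℝ} (hR : 0 ≤ R) (hM : ∀ m, ∑ l, M m l ^ 2 ≤ R) :
    frobNorm (lagMatrix p j * M) ^ 2 ≤ R / ((p:ℝ) - j) := by
  have h : (0:ℝ) < p - j := sub_pos.2 (by exact_mod_cast hj)
  have hA := lagMatrix_nonneg hj
  rw [frobNorm, Real.sq_sqrt (by positivity)]
  have hentry : ∀ k l, (lagMatrix p j * M) k l ^ 2 ≤
      1 / ((p:ℝ) - j) * ∑ m, lagMatrix p j k m * M m l ^ 2 := fun k l => by
    rw [Matrix.mul_apply]
    refine (Finset.sum_sq_le_sum_mul_sum_of_sq_le_mul Finset.univ (fun m _ => hA k m)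
      (fun m _ => mul_nonneg (hA k m) (sq_nonneg (M m l))) (fun m _ => le_of_eq (by ring))).trans ?_
    exact mul_le_mul_of_nonneg_right (lagMatrix_row_sum_le hj k)
      (Finset.sum_nonneg fun m _ => mul_nonneg (hA k m) (sq_nonneg _))
  calc ∑ k, ∑ l, (lagMatrix p j * M) k l ^ 2
      ≤ ∑ k, ∑ l, 1 / ((p:ℝ) - j) * ∑ m, lagMatrix p j k m * M m l ^ 2 :=
        Finset.sum_le_sum fun k _ => Finset.sum_le_sum fun l _ => hentry k l
    _ = 1 / ((p:ℝ) - j) * ∑ k, ∑ m, lagMatrix p j k m * ∑ l, M m l ^ 2 := by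
        simp only [← Finset.mul_sum]
        congr 1
        refine Finset.sum_congr rfl fun k _ => ?_
        rw [Finset.sum_comm]
        simp only [Finset.mul_sum]
    _ ≤ 1 / ((p:ℝ) - j) * ∑ k, ∑ m, lagMatrix p j k m * R := by
        gcongr with k _ m _
        · exact hA k m
        · exact hM m
    _ = 1 / ((p:ℝ) - j) * ((∑ k, ∑ m, lagMatrix p j k m) * R) := by
        simp only [Finset.sum_mul]
    _ ≤ 1 / ((p:ℝ) - j) * (1 * R) := by
        gcongr
        exact lagMatrix_sum_le_one hj
    _ = R / ((p:ℝ) - j) := by ring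

/-- Frobenius norm bound for a single `A_j Σ`, `Σ ∈ F(s,S,σ)`. -/
theorem lagMatrix_single_mul_frobNorm_bound {p s S : ℕ} (hs : 1 ≤ s) (hsS : s ≤ S)
    (hSp : S ≤ p - 1) (σ σ0 : ℝ) (hσ : 0 < σ) (hσ0 : 0 < σ0)
    (Cov : Matrix (Fin p) (Fin p) ℝ) (hCov : memF p s S σ σ0 Cov)
    (j : ℕ) (hj1 : 1 ≤ j) (hjS : j ≤ S) :
    ((j : ℝ) ≤ (p:ℝ)/2 - 1 →
      (frobNorm (lagMatrix p j * Cov))^2 ≤ σ0^2 * (2 * s + 1) / ((p:ℝ) - S)) ∧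
    ((p:ℝ)/2 ≤ (j : ℝ) →
      (frobNorm (lagMatrix p j * Cov))^2 ≤ σ0^2 * ((p:ℝ)/2) * (2 * s + 1) / ((p:ℝ) - S)) := by
  have hS : S < p := by omega
  have hpS : (0:ℝ) < p - S := sub_pos.2 (by exact_mod_cast hS)
  have hjS' : (j:ℝ) ≤ S := by exact_mod_cast hjS
  have hp : (1:ℝ) ≤ (p:ℝ) / 2 := by
    have : (2:ℝ) ≤ p := by exact_mod_cast (by omega : 2 ≤ p)
    linarith
  have hR : (0:ℝ) ≤ σ0 ^ 2 * (2 * s + 1) := by positivity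
  have main : frobNorm (lagMatrix p j * Cov) ^ 2 ≤ σ0 ^ 2 * (2 * s + 1) / ((p:ℝ) - S) :=
    (frobNorm_lagMatrix_mul_sq_le (by omega) Cov hR hCov.row_sq_sum_le).trans
      (div_le_div_of_nonneg_left hR hpS (by linarith))
  refine ⟨fun _ => main, fun _ => main.trans ?_⟩
  refine div_le_div_of_nonneg_right ?_ hpS.le
  rw [mul_right_comm]
  exact le_mul_of_one_le_right hR hp
end

section
/- Let Σ be a symmetric p×p real matrix whose entries satisfy |σ_{i,m}| ≤ σ_0 for all i,m, for some σ_0 ≥ 0, and let 1 ≤ j ≤ p−1. Then Tr(A_j² Σ) ≤ σ_0/(p−j) if j < p/2, and Tr(A_j² Σ) ≤ σ_0/(2(p−j)) if j ≥ p/2. -/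
open MeasureTheory Matrix Real
open scoped ENNReal BigOperators NNReal

theorem sum_boole_val_eq {p : ℕ} (m : ℕ) :
    ∑ i : Fin p, (if (i : ℕ) = m then (1 : ℝ) else 0) = if m < p then 1 else 0 := by
  rw [Fin.sum_univ_eq_sum_range (fun i => if i = m then (1 : ℝ) else 0) p]
  simp

theorem lagMatrix_eq_mul_add {p j : ℕ} (hj : 1 ≤ j) (k l : Fin p) :
    lagMatrix p j k l = 1 / (2 * ((p : ℝ) - j)) *
      ((if (l : ℕ) = k + j then 1 else 0) +
        if j ≤ (k : ℕ) then (if (l : ℕ) = k - j then 1 else 0) else 0) := by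
  simp only [lagMatrix, Matrix.of_apply]
  split_ifs <;> first | omega | simp

theorem sum_lagMatrix_row {p j : ℕ} (hj : 1 ≤ j) (k : Fin p) :
    ∑ l, lagMatrix p j k l = 1 / (2 * ((p : ℝ) - j)) *
      ((if (k : ℕ) + j < p then 1 else 0) + if j ≤ (k : ℕ) then 1 else 0) := by
  simp only [lagMatrix_eq_mul_add hj, ← Finset.mul_sum, Finset.sum_add_distrib,
    sum_boole_val_eq]
  congr 2
  split_ifs with h
  · rw [sum_boole_val_eq, if_pos (by omega)]
  · simp

theorem sum_sum_lagMatrix {p j : ℕ} (hj : 1 ≤ j) (hjp : j < p) :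
    ∑ k, ∑ l, lagMatrix p j k l = 1 := by
  have hpos : (0 : ℝ) < p - j := sub_pos.2 (by exact_mod_cast hjp)
  have upper : ∑ k : Fin p, (if (k : ℕ) + j < p then (1 : ℝ) else 0) = p - j := by
    rw [Fin.sum_univ_eq_sum_range (fun k => if k + j < p then (1 : ℝ) else 0) p,
      Finset.sum_boole, ← Nat.cast_sub hjp.le]
    congr 1
    rw [← Finset.card_range (p - j)]
    congr 1
    ext k
    simp only [Finset.mem_filter, Finset.mem_range]
    omega
  have lower : ∑ k : Fin p, (if j ≤ (k : ℕ) then (1 : ℝ) else 0) = p - j := by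
    rw [Fin.sum_univ_eq_sum_range (fun k => if j ≤ k then (1 : ℝ) else 0) p,
      Finset.sum_boole, ← Nat.cast_sub hjp.le]
    congr 1
    rw [← Nat.card_Ico]
    congr 1
    ext k
    simp only [Finset.mem_filter, Finset.mem_range, Finset.mem_Ico]
    omega
  simp only [sum_lagMatrix_row hj, ← Finset.mul_sum, Finset.sum_add_distrib, upper, lower]
  field_simp
  norm_num

/-- If every row sum of `A_j` is at most `r`, then `Tr(A_j² Σ) ≤ σ0 r`. -/
theorem trace_lagMatrix_sq_mul_le {p j : ℕ} (hj : 1 ≤ j) (hjp : j < p)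
    {Cov : Matrix (Fin p) (Fin p) ℝ} {σ0 r : ℝ} (hσ0 : 0 ≤ σ0) (hbd : ∀ i m, |Cov i m| ≤ σ0)
    (hr : ∀ k, ∑ l, lagMatrix p j k l ≤ r) :
    Matrix.trace ((lagMatrix p j) ^ 2 * Cov) ≤ σ0 * r := by
  have hpos : (0 : ℝ) < p - j := sub_pos.2 (by exact_mod_cast hjp)
  have hnonneg : ∀ k l, 0 ≤ lagMatrix p j k l := fun k l => by
    simp only [lagMatrix, Matrix.of_apply]
    split_ifs <;> positivity
  calc Matrix.trace ((lagMatrix p j) ^ 2 * Cov)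
      = ∑ i, ∑ m, ∑ k, lagMatrix p j i k * lagMatrix p j k m * Cov m i := by
        simp only [Matrix.trace, Matrix.diag_apply, pow_two, Matrix.mul_apply, Finset.sum_mul]
    _ ≤ ∑ i, ∑ m, ∑ k, lagMatrix p j i k * lagMatrix p j k m * σ0 := by
        gcongr with i _ m _ k _
        · exact mul_nonneg (hnonneg _ _) (hnonneg _ _)
        · exact (le_abs_self _).trans (hbd _ _)
    _ = σ0 * ∑ i, ∑ k, lagMatrix p j i k * ∑ m, lagMatrix p j k m := by
        simp only [Finset.mul_sum]
        refine Finset.sum_congr rfl fun i _ => ?_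
        rw [Finset.sum_comm]
        exact Finset.sum_congr rfl fun _ _ => Finset.sum_congr rfl fun _ _ => by ring
    _ ≤ σ0 * ∑ i, ∑ k, lagMatrix p j i k * r := by
        gcongr with i _ k _
        · exact hnonneg _ _
        · exact hr k
    _ = σ0 * r := by
        simp only [← Finset.sum_mul, sum_sum_lagMatrix hj hjp, one_mul]

/-- Bound on `Tr(A_j² Σ)` for a symmetric matrix with entries
bounded by `σ0`. -/
theorem trace_lagMatrix_sq_bound {p : ℕ} (Cov : Matrix (Fin p) (Fin p) ℝ)
    (hCov : Cov.IsSymm) (σ0 : ℝ) (hσ0 : 0 ≤ σ0) (hbd : ∀ i m, |Cov i m| ≤ σ0)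
    (j : ℕ) (hj1 : 1 ≤ j) (hjp : j ≤ p - 1) :
    ((j : ℝ) < (p:ℝ)/2 →
      Matrix.trace ((lagMatrix p j)^2 * Cov) ≤ σ0 / ((p:ℝ) - j)) ∧
    ((p:ℝ)/2 ≤ (j : ℝ) →
      Matrix.trace ((lagMatrix p j)^2 * Cov) ≤ σ0 / (2 * ((p:ℝ) - j))) := by
  have hlt : j < p := by omega
  have hpos : (0 : ℝ) < p - j := sub_pos.2 (by exact_mod_cast hlt)
  constructor
  · intro _
    refine (trace_lagMatrix_sq_mul_le hj1 hlt hσ0 hbd (r := 1 / (p - j)) fun k => ?_).trans_eq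
      (mul_one_div _ _)
    rw [sum_lagMatrix_row hj1]
    calc _ ≤ 1 / (2 * ((p : ℝ) - j)) * (1 + 1) := by
          gcongr <;> split_ifs <;> norm_num
      _ = 1 / (p - j) := by field_simp; norm_num
  · intro h
    have hpj : p ≤ 2 * j := by
      have : (p : ℝ) ≤ 2 * j := by linarith
      exact_mod_cast this
    refine (trace_lagMatrix_sq_mul_le hj1 hlt hσ0 hbd (r := 1 / (2 * (p - j))) fun k => ?_).trans_eq
      (mul_one_div _ _)
    rw [sum_lagMatrix_row hj1]
    refine mul_le_of_le_one_right (by positivity) ?_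
    split_ifs <;> first | omega | norm_num
end
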